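/- Let $\mu$ be a finite symmetric nonnegative Borel measure on $\mathbb{R}^d$ with zero-order Lévy operator $\mathcal{L}$, and let $h\colon\mathbb{R}\to\mathbb{R}$ be Lipschitz with weak derivative $h'$ of bounded variation. Then for any $\phi\in L^\infty(\mathbb{R}^d)$ with compact support and $\mathcal{L}[\phi]\in L^1(\mathbb{R}^d)$, one has $\|\mathcal{L}[h(\phi)]\|_{L^1(\mathbb{R}^d)} \le \big(\|h'\|_{L^\infty(\mathbb{R})}+|h'|_{TV(\mathbb{R})}\big)\,\|\mathcal{L}[\phi]\|_{L^1(\mathbb{R}^d)}$. -/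

import Mathlib

open MeasureTheory Filter Topology
open scoped ENNReal NNReal

/-- If the increments of `g` are dominated by those of `v`, then so are the first-order Taylor
remainders of their primitives. -/
lemma abs_integral_sub_mul_le_of_abs_sub_le {g v : ℝ → ℝ}
    (hgv : ∀ b c, b ≤ c → |g c - g b| ≤ v c - v b) (a b : ℝ) :
    |(∫ t in a..b, g t) - g a * (b - a)| ≤ (∫ t in a..b, v t) - v a * (b - a) := by
  have hv : Monotone v := fun b c hbc => by
    linarith [hgv b c hbc, abs_nonneg (g c - g b)]
  have hvg : Monotone (v + g) := fun b c hbc => by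
    simp only [Pi.add_apply]
    linarith [hgv b c hbc, neg_abs_le (g c - g b)]
  have hvi : ∀ p q, IntervalIntegrable v volume p q := fun p q => hv.intervalIntegrable
  have hgi : ∀ p q, IntervalIntegrable g volume p q := fun p q => by
    simpa using (hvg.intervalIntegrable (μ := volume) (a := p) (b := q)).sub (hvi p q)
  have hremainder : ∀ f : ℝ → ℝ, (∀ p q, IntervalIntegrable f volume p q) →
      ∀ p q r : ℝ, (∫ t in p..q, f t) - r * (q - p) = ∫ t in p..q, (f t - r) := by
    intro f hf p q r
    rw [intervalIntegral.integral_sub (hf p q) intervalIntegrable_const,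
      intervalIntegral.integral_const, smul_eq_mul, mul_comm]
  rw [hremainder g hgi, hremainder v hvi]
  have hgi' : ∀ p q, IntervalIntegrable (fun t => |g t - g a|) volume p q := fun p q =>
    ((hgi p q).sub intervalIntegrable_const).abs
  have hvi' : ∀ p q, IntervalIntegrable (fun t => v t - v a) volume p q := fun p q =>
    (hvi p q).sub intervalIntegrable_const
  rcases le_total a b with hab | hba
  · refine (intervalIntegral.abs_integral_le_integral_abs hab).trans ?_
    exact intervalIntegral.integral_mono_on hab (hgi' a b) (hvi' a b)
      fun t ht => hgv a t ht.1
  · rw [intervalIntegral.integral_symm b a, abs_neg, intervalIntegral.integral_symm b a,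
      ← intervalIntegral.integral_neg]
    refine (intervalIntegral.abs_integral_le_integral_abs hba).trans ?_
    refine intervalIntegral.integral_mono_on hba (hgi' b a) (hvi' b a).neg fun t ht => ?_
    rw [abs_sub_comm, neg_sub]
    exact hgv t a ht.2

/-- A primitive of a function bounded by `C` is continuous. -/
lemma continuous_of_sub_eq_intervalIntegral {f f' : ℝ → ℝ} {C : ℝ}
    (hf : ∀ a c : ℝ, f c - f a = ∫ t in a..c, f' t) (hC : ∀ t, |f' t| ≤ C) : Continuous f := by
  refine (LipschitzWith.of_dist_le_mul (K := C.toNNReal) fun x y => ?_).continuous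
  rw [Real.dist_eq, Real.dist_eq, hf y x,
    Real.coe_toNNReal C ((abs_nonneg _).trans (hC 0))]
  exact intervalIntegral.norm_integral_le_of_norm_le_const (f := f') fun t _ => hC t

section ZeroOrderLevy

variable {E : Type*} [AddGroup E] [MeasurableSpace E] [MeasurableAdd₂ E]
  {ν μ : Measure E} [SFinite ν] [ν.IsAddRightInvariant] [IsFiniteMeasure μ] {g : E → ℝ}

lemma integrable_prod_translate (hg : Integrable g ν) :
    Integrable (fun p : E × E => g (p.1 + p.2)) (ν.prod μ) := by
  simpa [Function.comp_def] using
    (measurePreserving_add_prod ν μ).integrable_comp_of_integrable (hg.comp_fst μ)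

lemma integrable_integral_translate_sub (hg : Integrable g ν) :
    Integrable (fun x => ∫ z, (g (x + z) - g x) ∂μ) ν :=
  ((integrable_prod_translate hg).sub (hg.comp_fst μ)).integral_prod_left

/-- A zero-order Lévy operator has mean zero on integrable functions. -/
lemma integral_integral_translate_sub_eq_zero (hg : Integrable g ν) :
    ∫ x, ∫ z, (g (x + z) - g x) ∂μ ∂ν = 0 := by
  have hint := (integrable_prod_translate (μ := μ) hg).sub (hg.comp_fst μ)
  rw [integral_integral_swap hint]
  refine integral_eq_zero_of_ae (Eventually.of_forall fun z => ?_)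
  simp only [Pi.zero_apply]
  rw [integral_sub (hg.comp_add_right z) hg, integral_add_right_eq_self g z, sub_self]

end ZeroOrderLevy

lemma HasCompactSupport.integrable_of_abs_le {X : Type*} [TopologicalSpace X] [R1Space X]
    [MeasurableSpace X] [OpensMeasurableSpace X] {ν : Measure X} [IsFiniteMeasureOnCompacts ν]
    {f : X → ℝ} (hf : Measurable f) (hfs : HasCompactSupport f) {C : ℝ} (hC : ∀ x, |f x| ≤ C) :
    Integrable f ν := by
  rw [← integrableOn_iff_integrable_of_support_subset (subset_tsupport f)]
  exact Measure.integrableOn_of_bounded hfs.measure_lt_top.ne hf.aestronglyMeasurable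
    (Eventually.of_forall hC)

/-- `L¹` bound for a zero-order Lévy operator applied to a composition: if `h` is
Lipschitz with weak derivative `h'` bounded (by `C1`) and of bounded variation, and
`φ` is bounded, measurable, compactly supported with `𝓛[φ] ∈ L¹`, then
`‖𝓛[h∘φ]‖_{L¹} ≤ (‖h'‖_∞ + |h'|_{TV}) ‖𝓛[φ]‖_{L¹}`. -/
theorem stmt7 (d : ℕ) (μ : Measure (EuclideanSpace ℝ (Fin d))) [IsFiniteMeasure μ]
    (hsym : μ.map (fun z => -z) = μ)
    (h h' : ℝ → ℝ)
    (hweak : ∀ a c : ℝ, h c - h a = ∫ t in a..c, h' t)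
    (C1 : ℝ) (hC1 : ∀ t, |h' t| ≤ C1)
    (hTV : eVariationOn h' Set.univ ≠ ⊤)
    (φ : EuclideanSpace ℝ (Fin d) → ℝ)
    (hφm : Measurable φ) (Cφ : ℝ) (hφb : ∀ x, |φ x| ≤ Cφ)
    (hcs : HasCompactSupport φ)
    (hL1 : (∫⁻ x, ENNReal.ofReal |∫ z, (φ (x + z) - φ x) ∂μ| ∂volume) ≠ ⊤) :
    (∫⁻ x, ENNReal.ofReal |∫ z, (h (φ (x + z)) - h (φ x)) ∂μ| ∂volume)
      ≤ ENNReal.ofReal (C1 + (eVariationOn h' Set.univ).toReal)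
          * ∫⁻ x, ENNReal.ofReal |∫ z, (φ (x + z) - φ x) ∂μ| ∂volume := by
  have hbv : BoundedVariationOn h' Set.univ := hTV
  have hlbv := hbv.locallyBoundedVariationOn
  set V := (eVariationOn h' Set.univ).toReal
  set v := variationOnFromTo h' Set.univ 0
  have hhv : ∀ b c, b ≤ c → |h' c - h' b| ≤ v c - v b := fun b c hbc =>
    variationOnFromTo.abs_sub_le_sub_of_le hlbv trivial trivial trivial hbc
  have hvV : ∀ t, |v t| ≤ V := fun t => variationOnFromTo.abs_le_eVariationOn hbv
  have hvmono : Monotone v := fun b c hbc => by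
    linarith [hhv b c hbc, abs_nonneg (h' c - h' b)]
  set H : ℝ → ℝ := fun s => ∫ t in (0 : ℝ)..s, v t
  have hH : ∀ a c : ℝ, H c - H a = ∫ t in a..c, v t := fun a c =>
    intervalIntegral.integral_interval_sub_left hvmono.intervalIntegrable
      hvmono.intervalIntegrable
  have hhcont : Continuous h := continuous_of_sub_eq_intervalIntegral hweak hC1
  have hHcont : Continuous H := continuous_of_sub_eq_intervalIntegral hH hvV
  -- Everything is bounded along the range of `φ`, hence `μ`-integrable.
  have hbounded : ∀ f : ℝ → ℝ, Continuous f → ∃ C, ∀ x, |f (φ x)| ≤ C := fun f hf => by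
    obtain ⟨C, hC⟩ := (isCompact_Icc (a := -Cφ) (b := Cφ)).exists_bound_of_continuousOn
      hf.continuousOn
    exact ⟨C, fun x => hC _ (abs_le.1 (hφb x))⟩
  have hμint : ∀ f : ℝ → ℝ, Continuous f → ∀ x,
      Integrable (fun z => f (φ (x + z)) - f (φ x)) μ := fun f hf x => by
    obtain ⟨C, hC⟩ := hbounded f hf
    have hm : Measurable fun z => f (φ (x + z)) :=
      hf.measurable.comp (hφm.comp (measurable_const_add x))
    exact (Integrable.of_bound hm.aestronglyMeasurable C
      (Eventually.of_forall fun z => hC (x + z))).sub (integrable_const _)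
  have hφint : Integrable φ volume := hcs.integrable_of_abs_le hφm hφb
  have hHφint : Integrable (fun x => H (φ x)) volume := by
    obtain ⟨C, hC⟩ := hbounded H hHcont
    exact (hcs.comp_left (g := H) intervalIntegral.integral_same).integrable_of_abs_le
      (hHcont.measurable.comp hφm) hC
  set Lφ : EuclideanSpace ℝ (Fin d) → ℝ := fun x => ∫ z, (φ (x + z) - φ x) ∂μ
  set LH : EuclideanSpace ℝ (Fin d) → ℝ := fun x => ∫ z, (H (φ (x + z)) - H (φ x)) ∂μ
  have hLφ : Integrable Lφ volume := integrable_integral_translate_sub hφint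
  have hLH : Integrable LH volume := integrable_integral_translate_sub hHφint
  have hvLφ : Integrable (fun x => v (φ x) * Lφ x) volume :=
    hLφ.bdd_mul (c := V) (hvmono.measurable.comp hφm).aestronglyMeasurable
      (Eventually.of_forall fun x => hvV (φ x))
  have hpointwise : ∀ x, |∫ z, (h (φ (x + z)) - h (φ x)) ∂μ|
      ≤ C1 * |Lφ x| + (LH x - v (φ x) * Lφ x) := by
    intro x
    have hφx : Integrable (fun z => φ (x + z) - φ x) μ := hμint id continuous_id x
    have hsplit : ∀ f : ℝ → ℝ, Continuous f → ∀ r : ℝ,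
        ∫ z, (f (φ (x + z)) - f (φ x) - r * (φ (x + z) - φ x)) ∂μ
          = (∫ z, (f (φ (x + z)) - f (φ x)) ∂μ) - r * Lφ x := fun f hf r => by
      rw [integral_sub (hμint f hf x) (hφx.const_mul r), integral_const_mul]
    have hremainder : |(∫ z, (h (φ (x + z)) - h (φ x)) ∂μ) - h' (φ x) * Lφ x|
        ≤ LH x - v (φ x) * Lφ x := by
      rw [← hsplit h hhcont, ← hsplit H hHcont]
      refine (abs_integral_le_integral_abs).trans (integral_mono
        ((hμint h hhcont x).sub (hφx.const_mul _)).abs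
        ((hμint H hHcont x).sub (hφx.const_mul _)) fun z => ?_)
      simp only [hweak, hH]
      exact abs_integral_sub_mul_le_of_abs_sub_le hhv _ _
    have hmain : |h' (φ x) * Lφ x| ≤ C1 * |Lφ x| := by
      rw [abs_mul]
      exact mul_le_mul_of_nonneg_right (hC1 _) (abs_nonneg _)
    have htriangle := abs_add_le (h' (φ x) * Lφ x)
      ((∫ z, (h (φ (x + z)) - h (φ x)) ∂μ) - h' (φ x) * Lφ x)
    rw [add_sub_cancel] at htriangle
    linarith
  have hremainder : Integrable (fun x => LH x - v (φ x) * Lφ x) volume := hLH.sub hvLφ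
  have hmajorant : Integrable (fun x => C1 * |Lφ x| + (LH x - v (φ x) * Lφ x)) volume :=
    (hLφ.abs.const_mul C1).add hremainder
  have hmean : ∫ x, LH x = 0 := integral_integral_translate_sub_eq_zero hHφint
  have hvbound : -(∫ x, v (φ x) * Lφ x) ≤ V * ∫ x, |Lφ x| := by
    rw [← integral_neg, ← integral_const_mul]
    refine integral_mono hvLφ.neg (hLφ.abs.const_mul V) fun x => ?_
    refine (neg_le_abs _).trans ?_
    rw [abs_mul]
    exact mul_le_mul_of_nonneg_right (hvV _) (abs_nonneg _)
  have hV : 0 ≤ V := ENNReal.toReal_nonneg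
  have hC1nonneg : 0 ≤ C1 := (abs_nonneg _).trans (hC1 0)
  calc _ ≤ ∫⁻ x, ENNReal.ofReal (C1 * |Lφ x| + (LH x - v (φ x) * Lφ x)) :=
        lintegral_mono fun x => ENNReal.ofReal_le_ofReal (hpointwise x)
    _ = ENNReal.ofReal (∫ x, (C1 * |Lφ x| + (LH x - v (φ x) * Lφ x))) :=
        (ofReal_integral_eq_lintegral_ofReal hmajorant
          (Eventually.of_forall fun x => (abs_nonneg _).trans (hpointwise x))).symm
    _ ≤ ENNReal.ofReal ((C1 + V) * ∫ x, |Lφ x|) := by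
        refine ENNReal.ofReal_le_ofReal ?_
        rw [integral_add (hLφ.abs.const_mul C1) hremainder, integral_sub hLH hvLφ,
          integral_const_mul, hmean]
        linarith
    _ = _ := by
        rw [ENNReal.ofReal_mul (add_nonneg hC1nonneg hV),
          ofReal_integral_eq_lintegral_ofReal hLφ.abs
            (Eventually.of_forall fun x => abs_nonneg _)]
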